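/- Let η > 0, m ∈ ℕ, λ_k ∈ (0,∞) and α_k, β_k ∈ ℂ for k = 1,…,m, and set κ_k = λ_k η. Assume D₀ = 1 − Σ_{k=1}^m (α_k + β_k) cos κ_k + Σ_{i,j=1}^m α_i β_j cos(κ_i − κ_j) ≠ 0. Then for every continuous g : [0,∞) → ℂ and every a, c ∈ ℂ there exists exactly one twice continuously differentiable function w : [0,∞) → ℂ satisfying w''(t) + η² w(t) = g(t) for all t ≥ 0, together with the multipoint conditions w(0) = a + Σ_{k=1}^m α_k w(λ_k) and w'(0) = c + Σ_{k=1}^m β_k w'(λ_k). -/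

import Mathlib

/-!
STATEMENT 3: frequency-wise content of Lemma 2.1.  For `η > 0`, `λ_k > 0`,
complex `α_k, β_k` with `D₀ ≠ 0` (`κ_k = λ_k η`), for every continuous `g` and
every `a, c ∈ ℂ` there is exactly one twice continuously differentiable
`w : [0,∞) → ℂ` with `w'' + η² w = g` on `[0,∞)` and the multipoint conditions
`w 0 = a + Σ α_k w(λ_k)`, `w' 0 = c + Σ β_k w'(λ_k)`.
-/

noncomputable section

open Set

/-- `w` solves the oscillator equation with multipoint conditions on `[0,∞)`. -/
def IsMultipointOscSol (η : ℝ) {m : ℕ} (lam : Fin m → ℝ) (α β : Fin m → ℂ)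
    (g : ℝ → ℂ) (a c : ℂ) (w : ℝ → ℂ) : Prop :=
  ContDiffOn ℝ 2 w (Set.Ici 0)
    ∧ (∀ t : ℝ, 0 ≤ t →
        derivWithin (derivWithin w (Set.Ici 0)) (Set.Ici 0) t + (η : ℂ) ^ 2 * w t = g t)
    ∧ w 0 = a + ∑ k, α k * w (lam k)
    ∧ derivWithin w (Set.Ici 0) 0 = c + ∑ k, β k * derivWithin w (Set.Ici 0) (lam k)

lemma osc_cos_deriv (η t : ℝ) :
    HasDerivAt (fun s : ℝ => Complex.cos (η * s)) (-(η * Complex.sin (η * t))) t := by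
  have h1 : HasDerivAt (fun s : ℂ => (η : ℂ) * s) (η : ℂ) (t : ℂ) := by
    simpa using (hasDerivAt_id (t : ℂ)).const_mul (η : ℂ)
  have := h1.ccos.comp_ofReal
  refine this.congr_deriv ?_
  ring

lemma osc_sin_deriv (η t : ℝ) :
    HasDerivAt (fun s : ℝ => Complex.sin (η * s)) (η * Complex.cos (η * t)) t := by
  have h1 : HasDerivAt (fun s : ℂ => (η : ℂ) * s) (η : ℂ) (t : ℂ) := by
    simpa using (hasDerivAt_id (t : ℂ)).const_mul (η : ℂ)
  have := h1.csin.comp_ofReal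
  refine this.congr_deriv ?_
  ring

lemma osc_particular (η : ℝ) (hη : 0 < η) (G : ℝ → ℂ) (hG : Continuous G) :
    ∃ P Q : ℝ → ℂ, (∀ t, HasDerivAt P (Q t) t) ∧
      (∀ t, HasDerivAt Q (G t - (η : ℂ) ^ 2 * P t) t) := by
  have hη' : (η : ℂ) ≠ 0 := by exact_mod_cast hη.ne'
  have hc : Continuous fun s : ℝ => Complex.cos (η * s) * G s := by fun_prop
  have hs : Continuous fun s : ℝ => Complex.sin (η * s) * G s := by fun_prop
  have hIc := fun t => hc.integral_hasStrictDerivAt 0 t |>.hasDerivAt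
  have hIs := fun t => hs.integral_hasStrictDerivAt 0 t |>.hasDerivAt
  set Ic : ℝ → ℂ := fun u => ∫ s in (0:ℝ)..u, Complex.cos (η * s) * G s with hIcd
  set Is : ℝ → ℂ := fun u => ∫ s in (0:ℝ)..u, Complex.sin (η * s) * G s with hIsd
  refine ⟨fun t => (Complex.sin (η * t) * Ic t - Complex.cos (η * t) * Is t) / η,
    fun t => Complex.cos (η * t) * Ic t + Complex.sin (η * t) * Is t, ?_, ?_⟩
  · intro t
    have := ((((osc_sin_deriv η t).mul (hIc t)).sub ((osc_cos_deriv η t).mul (hIs t))).div_const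
      (η : ℂ))
    refine this.congr_deriv ?_
    field_simp
    ring
  · intro t
    have := ((osc_cos_deriv η t).mul (hIc t)).add ((osc_sin_deriv η t).mul (hIs t))
    refine this.congr_deriv ?_
    have h := Complex.sin_sq_add_cos_sq (η * t)
    field_simp
    linear_combination (G t) * h

lemma osc_general (η : ℝ) (hη : 0 < η) (G P Q : ℝ → ℂ)
    (hP : ∀ t, HasDerivAt P (Q t) t)
    (hQ : ∀ t, HasDerivAt Q (G t - (η : ℂ) ^ 2 * P t) t)
    (w v : ℝ → ℂ)
    (hw : ∀ t ∈ Ici (0:ℝ), HasDerivWithinAt w (v t) (Ici 0) t)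
    (hv : ∀ t ∈ Ici (0:ℝ), HasDerivWithinAt v (G t - (η : ℂ) ^ 2 * w t) (Ici 0) t) :
    ∃ A B : ℂ, ∀ t ∈ Ici (0:ℝ),
      w t = P t + (A * Complex.cos (η * t) + B * Complex.sin (η * t)) ∧
      v t = Q t + η * (B * Complex.cos (η * t) - A * Complex.sin (η * t)) := by
  have hη' : (η : ℂ) ≠ 0 := by exact_mod_cast hη.ne'
  have const : ∀ F : ℝ → ℂ, (∀ t ∈ Ici (0:ℝ), HasDerivWithinAt F 0 (Ici 0) t) →
      ∀ t ∈ Ici (0:ℝ), F t = F 0 := by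
    intro F hF t ht
    have := (convex_Ici (0:ℝ)).norm_image_sub_le_of_norm_hasDerivWithin_le (C := 0)
      hF (by simp) self_mem_Ici ht
    simpa [sub_eq_zero] using this
  have hA := const (fun t => (w t - P t) * Complex.cos (η * t)
      - (v t - Q t) * Complex.sin (η * t) / η) (by
    intro t ht
    have := (((hw t ht).sub (hP t).hasDerivWithinAt).mul
      (osc_cos_deriv η t).hasDerivWithinAt).sub
      ((((hv t ht).sub (hQ t).hasDerivWithinAt).mul
        (osc_sin_deriv η t).hasDerivWithinAt).div_const (η : ℂ))
    refine this.congr_deriv ?_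
    simp only [Pi.sub_apply]
    field_simp
    ring)
  have hB := const (fun t => (w t - P t) * Complex.sin (η * t)
      + (v t - Q t) * Complex.cos (η * t) / η) (by
    intro t ht
    have := (((hw t ht).sub (hP t).hasDerivWithinAt).mul
      (osc_sin_deriv η t).hasDerivWithinAt).add
      ((((hv t ht).sub (hQ t).hasDerivWithinAt).mul
        (osc_cos_deriv η t).hasDerivWithinAt).div_const (η : ℂ))
    refine this.congr_deriv ?_
    simp only [Pi.sub_apply]
    field_simp
    ring)
  refine ⟨(w 0 - P 0) * Complex.cos (η * (0:ℝ)) - (v 0 - Q 0) * Complex.sin (η * (0:ℝ)) / η,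
    (w 0 - P 0) * Complex.sin (η * (0:ℝ)) + (v 0 - Q 0) * Complex.cos (η * (0:ℝ)) / η,
    fun t ht => ?_⟩
  have h1 := hA t ht
  have h2 := hB t ht
  rw [← h1, ← h2]
  have h := Complex.sin_sq_add_cos_sq (η * t)
  constructor
  · field_simp
    linear_combination (-(w t - P t) * η) * h
  · field_simp
    linear_combination (-(v t - Q t)) * h

/-- The sums appearing in the multipoint conditions, evaluated. -/
lemma osc_det {m : ℕ} (η : ℝ) (lam : Fin m → ℝ) (α β : Fin m → ℂ) :
    (1 : ℂ) - ∑ k, (α k + β k) * (Real.cos (lam k * η) : ℂ)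
        + ∑ i, ∑ j, α i * β j * (Real.cos (lam i * η - lam j * η) : ℂ)
      = (1 - ∑ k, α k * Complex.cos (η * lam k)) * (1 - ∑ k, β k * Complex.cos (η * lam k))
        + (∑ k, α k * Complex.sin (η * lam k)) * (∑ k, β k * Complex.sin (η * lam k)) := by
  have h1 : ∑ k, (α k + β k) * (Real.cos (lam k * η) : ℂ)
      = ∑ k, α k * Complex.cos (η * lam k) + ∑ k, β k * Complex.cos (η * lam k) := by
    rw [← Finset.sum_add_distrib]
    refine Finset.sum_congr rfl fun k _ => ?_
    push_cast
    rw [mul_comm (lam k : ℂ)]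
    ring
  have h2 : ∑ i, ∑ j, α i * β j * (Real.cos (lam i * η - lam j * η) : ℂ)
      = (∑ k, α k * Complex.cos (η * lam k)) * (∑ k, β k * Complex.cos (η * lam k))
        + (∑ k, α k * Complex.sin (η * lam k)) * (∑ k, β k * Complex.sin (η * lam k)) := by
    rw [Finset.sum_mul_sum, Finset.sum_mul_sum, ← Finset.sum_add_distrib]
    refine Finset.sum_congr rfl fun i _ => ?_
    rw [← Finset.sum_add_distrib]
    refine Finset.sum_congr rfl fun j _ => ?_
    push_cast
    rw [Complex.cos_sub, mul_comm (lam i : ℂ), mul_comm (lam j : ℂ)]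
    ring
  rw [h1, h2]
  ring

theorem multipoint_oscillator_existence_uniqueness
    (η : ℝ) (hη : 0 < η) (m : ℕ) (lam : Fin m → ℝ) (hlam : ∀ k, 0 < lam k)
    (α β : Fin m → ℂ)
    (hD0 : (1 : ℂ) - ∑ k, (α k + β k) * (Real.cos (lam k * η) : ℂ)
        + ∑ i, ∑ j, α i * β j * (Real.cos (lam i * η - lam j * η) : ℂ) ≠ 0)
    (g : ℝ → ℂ) (hg : ContinuousOn g (Set.Ici 0)) (a c : ℂ) :
    ∃ w : ℝ → ℂ, IsMultipointOscSol η lam α β g a c w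
      ∧ ∀ w' : ℝ → ℂ, IsMultipointOscSol η lam α β g a c w' →
          Set.EqOn w' w (Set.Ici 0) := by
  have hη' : (η : ℂ) ≠ 0 := by exact_mod_cast hη.ne'
  rw [osc_det] at hD0
  obtain ⟨G, hG, hGg⟩ : ∃ G : ℝ → ℂ, Continuous G ∧ ∀ t, 0 ≤ t → G t = g t := by
    refine ⟨fun t => g (max t 0), ?_, fun t ht => by simp [ht]⟩
    exact hg.comp_continuous (by fun_prop) (fun t => by simp)
  obtain ⟨P, Q, hP, hQ⟩ := osc_particular η hη G hG
  set Ca := ∑ k, α k * Complex.cos (η * lam k) with hCa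
  set Cb := ∑ k, β k * Complex.cos (η * lam k) with hCb
  set Sa := ∑ k, α k * Complex.sin (η * lam k) with hSa
  set Sb := ∑ k, β k * Complex.sin (η * lam k) with hSb
  set p := a + ∑ k, α k * P (lam k) - P 0 with hp
  set q := c + ∑ k, β k * Q (lam k) - Q 0 with hq
  have sumA : ∀ A B : ℂ, ∑ k, α k * (P (lam k) + (A * Complex.cos (η * lam k)
      + B * Complex.sin (η * lam k))) = ∑ k, α k * P (lam k) + (A * Ca + B * Sa) := by
    intro A B
    rw [hCa, hSa, Finset.mul_sum, Finset.mul_sum, ← Finset.sum_add_distrib,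
      ← Finset.sum_add_distrib]
    exact Finset.sum_congr rfl fun k _ => by ring
  have sumB : ∀ A B : ℂ, ∑ k, β k * (Q (lam k) + η * (B * Complex.cos (η * lam k)
      - A * Complex.sin (η * lam k))) = ∑ k, β k * Q (lam k) + η * (B * Cb - A * Sb) := by
    intro A B
    rw [hCb, hSb, Finset.mul_sum, Finset.mul_sum, ← Finset.sum_sub_distrib, Finset.mul_sum,
      ← Finset.sum_add_distrib]
    exact Finset.sum_congr rfl fun k _ => by ring
  set D := (1 - Ca) * (1 - Cb) + Sa * Sb with hD
  obtain ⟨A, hA⟩ : ∃ A, A = (p * (1 - Cb) * η + Sa * q) / (η * D) := ⟨_, rfl⟩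
  obtain ⟨B, hB⟩ : ∃ B, B = ((1 - Ca) * q - η * Sb * p) / (η * D) := ⟨_, rfl⟩
  obtain ⟨w, hwd⟩ : ∃ w : ℝ → ℂ, w = fun t : ℝ => P t + (A * Complex.cos (η * t)
    + B * Complex.sin (η * t)) := ⟨_, rfl⟩
  obtain ⟨v, hvd⟩ : ∃ v : ℝ → ℂ, v = fun t : ℝ => Q t + η * (B * Complex.cos (η * t)
    - A * Complex.sin (η * t)) := ⟨_, rfl⟩
  have hw : ∀ t, HasDerivAt w (v t) t := by
    intro t
    rw [hwd, hvd]
    have := (hP t).add (((osc_cos_deriv η t).const_mul A).add ((osc_sin_deriv η t).const_mul B))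
    refine this.congr_deriv ?_
    ring
  have hv : ∀ t, HasDerivAt v (G t - (η : ℂ) ^ 2 * w t) t := by
    intro t
    rw [hwd, hvd]
    have := (hQ t).add ((((osc_cos_deriv η t).const_mul B).sub
      ((osc_sin_deriv η t).const_mul A)).const_mul (η : ℂ))
    refine this.congr_deriv ?_
    ring
  have hud : UniqueDiffOn ℝ (Ici (0:ℝ)) := uniqueDiffOn_Ici 0
  have hdw : ∀ t ∈ Ici (0:ℝ), derivWithin w (Ici 0) t = v t := fun t ht =>
    (hw t).hasDerivWithinAt.derivWithin (hud t ht)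
  have hwc : Continuous w := continuous_iff_continuousAt.2 fun t => (hw t).continuousAt
  have hcd : ContDiff ℝ 2 w := by
    have e1 : deriv w = v := funext fun t => (hw t).deriv
    have e2 : deriv v = fun t => G t - (η : ℂ) ^ 2 * w t := funext fun t => (hv t).deriv
    have hv1 : ContDiff ℝ 1 v := by
      rw [contDiff_one_iff_deriv, e2]
      exact ⟨fun t => (hv t).differentiableAt, by fun_prop⟩
    rw [show (2 : WithTop ℕ∞) = 1 + 1 by norm_num, contDiff_succ_iff_deriv, e1]
    exact ⟨fun t => (hw t).differentiableAt, by simp, hv1⟩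
  refine ⟨w, ⟨hcd.contDiffOn, ?_, ?_, ?_⟩, ?_⟩
  · intro t ht
    rw [derivWithin_congr hdw (hdw t ht), (hv t).hasDerivWithinAt.derivWithin (hud t ht), hGg t ht]
    ring
  · have e : w 0 = P 0 + A := by simp [hwd]
    rw [e]
    simp only [hwd]
    rw [sumA]
    have key : A * (1 - Ca) - B * Sa = p := by
      rw [hA, hB]
      field_simp
      rw [hD]
      ring
    rw [hp] at key
    linear_combination key
  · have e : v 0 = Q 0 + η * B := by simp [hvd]
    rw [hdw 0 self_mem_Ici, e, Finset.sum_congr rfl fun k _ => by rw [hdw _ (hlam k).le]]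
    simp only [hvd]
    rw [sumB]
    have key : η * (A * Sb + B * (1 - Cb)) = q := by
      rw [hA, hB]
      field_simp
      rw [hD]
      ring
    rw [hq] at key
    linear_combination key
  · rintro w' ⟨hc', hode, hb1, hb2⟩
    have hd1 : DifferentiableOn ℝ w' (Ici 0) := hc'.differentiableOn (by norm_num)
    have hd2 : DifferentiableOn ℝ (derivWithin w' (Ici 0)) (Ici 0) :=
      (hc'.derivWithin hud (m := 1) (by norm_num)).differentiableOn (by norm_num)
    obtain ⟨A', B', hAB⟩ := osc_general η hη G P Q hP hQ w' (derivWithin w' (Ici 0))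
      (fun t ht => (hd1 t ht).hasDerivWithinAt)
      (fun t ht => by
        have := (hd2 t ht).hasDerivWithinAt
        refine this.congr_deriv ?_
        simp only [hGg t ht, ← hode t ht]
        ring)
    rw [Finset.sum_congr rfl fun k _ => by rw [(hAB _ (hlam k).le).1], sumA,
      (hAB 0 self_mem_Ici).1] at hb1
    rw [Finset.sum_congr rfl fun k _ => by rw [(hAB _ (hlam k).le).2], sumB,
      (hAB 0 self_mem_Ici).2] at hb2
    simp only [Complex.ofReal_zero, mul_zero, Complex.cos_zero, Complex.sin_zero, mul_one,
      add_zero, sub_zero] at hb1 hb2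
    have k1 : A' * (1 - Ca) - B' * Sa = p := by rw [hp]; linear_combination hb1
    have k2 : η * (A' * Sb + B' * (1 - Cb)) = q := by rw [hq]; linear_combination hb2
    have hA' : A' = A := by
      rw [hA, ← k1, ← k2, eq_div_iff (mul_ne_zero hη' hD0), hD]
      ring
    have hB' : B' = B := by
      rw [hB, ← k1, ← k2, eq_div_iff (mul_ne_zero hη' hD0), hD]
      ring
    intro t ht
    rw [(hAB t ht).1, hA', hB', hwd]
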